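/- arXiv:1810.01315 — 2 statements merged into one kernel-verified Lean document; each statement's English description precedes it below -/
import Mathlib

section
/- No group of homeomorphisms of the lexicographically ordered square acts topologically transitively: for every subgroup G of the homeomorphism group of 𝕆 there exist nonempty open sets U, V ⊆ 𝕆 such that g(U) ∩ V = ∅ for every g ∈ G. -/
open Set

/-- The unit interval `[0,1]`. -/
local notation "𝕀" => unitInterval

/-- The strict lexicographic order on `[0,1] × [0,1]`:
`(x,y) < (s,t)` iff `x < s`, or `x = s` and `y < t`. -/
def lexLT (p q : 𝕀 × 𝕀) : Prop := p.1 < q.1 ∨ (p.1 = q.1 ∧ p.2 < q.2)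

/-- The order topology of the lexicographic order on `[0,1] × [0,1]`, generated by the
open rays. -/
def lexTop : TopologicalSpace (𝕀 × 𝕀) :=
  TopologicalSpace.generateFrom
    ({S | ∃ a, S = {x | lexLT a x}} ∪ {S | ∃ a, S = {x | lexLT x a}})

/-- The group of self-homeomorphisms of a topological space, under composition. -/
instance homeoGroup {X : Type*} [TopologicalSpace X] : Group (X ≃ₜ X) where
  mul f g := g.trans f
  one := Homeomorph.refl X
  inv := Homeomorph.symm
  mul_assoc _ _ _ := rfl
  one_mul _ := Homeomorph.ext fun _ => rfl
  mul_one _ := Homeomorph.ext fun _ => rfl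
  inv_mul_cancel := Homeomorph.self_trans_symm

theorem pre_open {X : Type*} [tX : TopologicalSpace X] {f : X → 𝕀 × 𝕀}
    (hf : @Continuous _ _ tX lexTop f) {O : Set (𝕀 × 𝕀)} (hO : @IsOpen _ lexTop O) :
    IsOpen (f ⁻¹' O) :=
  (@continuous_def _ _ tX lexTop f).1 hf O hO

theorem open_mem_nhds {X : Type*} {tX : TopologicalSpace X} {O : Set X} {x : X}
    (hO : @IsOpen _ tX O) (hx : x ∈ O) : O ∈ @nhds _ tX x := hO.mem_nhds hx

theorem isOpen_rayR (a : 𝕀 × 𝕀) : @IsOpen _ lexTop {x | lexLT a x} :=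
  TopologicalSpace.isOpen_generateFrom_of_mem (Or.inl ⟨a, rfl⟩)

theorem isOpen_rayL (a : 𝕀 × 𝕀) : @IsOpen _ lexTop {x | lexLT x a} :=
  TopologicalSpace.isOpen_generateFrom_of_mem (Or.inr ⟨a, rfl⟩)

theorem lexLT_trich (p q : 𝕀 × 𝕀) (h : p ≠ q) : lexLT p q ∨ lexLT q p := by
  unfold lexLT
  rcases lt_trichotomy p.1 q.1 with h1 | h1 | h1
  · exact Or.inl (Or.inl h1)
  · rcases lt_trichotomy p.2 q.2 with h2 | h2 | h2
    · exact Or.inl (Or.inr ⟨h1, h2⟩)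
    · exact absurd (Prod.ext h1 h2) h
    · exact Or.inr (Or.inr ⟨h1.symm, h2⟩)
  · exact Or.inr (Or.inl h1)

theorem lexLT_asymm (p q : 𝕀 × 𝕀) (h : lexLT p q) (h' : lexLT q p) : False := by
  rcases h with h | ⟨h, h2⟩ <;> rcases h' with h' | ⟨h', h2'⟩
  · exact lt_asymm h h'
  · exact h.ne h'.symm
  · exact h'.ne h.symm
  · exact lt_asymm h2 h2'

theorem continuous_column (c : 𝕀) : @Continuous 𝕀 (𝕀 × 𝕀) _ lexTop (fun t => (c, t)) := by
  refine continuous_generateFrom_iff.2 ?_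
  rintro S (⟨a, rfl⟩ | ⟨a, rfl⟩)
  · by_cases h : a.1 < c
    · convert isOpen_univ
      simp [lexLT, h]
    · by_cases h2 : a.1 = c
      · have : (fun t : 𝕀 => (c, t)) ⁻¹' {x | lexLT a x} = Ioi a.2 := by
          ext t; simp [lexLT, h2]
        rw [this]; exact isOpen_Ioi
      · convert isOpen_empty
        simp [lexLT, h, h2]
  · by_cases h : c < a.1
    · convert isOpen_univ
      simp [lexLT, h]
    · by_cases h2 : c = a.1
      · have : (fun t : 𝕀 => (c, t)) ⁻¹' {x | lexLT x a} = Iio a.2 := by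
          ext t; simp [lexLT, h2]
        rw [this]; exact isOpen_Iio
      · convert isOpen_empty
        simp [lexLT, h, h2]

theorem path_not_lt (f : 𝕀 → 𝕀 × 𝕀) (hf : @Continuous _ _ _ lexTop f) (s t : 𝕀) :
    ¬ (f s).1 < (f t).1 := by
  intro hlt
  have key : ∀ p : 𝕀 × 𝕀, (f s).1 < p.1 → p.1 < (f t).1 → ∃ u, f u = p := by
    intro p h1 h2
    by_contra hne
    push Not at hne
    have hL : IsOpen (f ⁻¹' {x | lexLT x p}) := pre_open hf (isOpen_rayL p)
    have hR : IsOpen (f ⁻¹' {x | lexLT p x}) := pre_open hf (isOpen_rayR p)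
    obtain ⟨z, -, hz1, hz2⟩ := isPreconnected_univ (α := 𝕀) _ _ hL hR
      (fun u _ => lexLT_trich _ _ (hne u)) ⟨s, trivial, Or.inl h1⟩ ⟨t, trivial, Or.inl h2⟩
    exact lexLT_asymm _ _ hz1 hz2
  let half : 𝕀 := ⟨1/2, by norm_num, by norm_num⟩
  have hc : (Ioo (f s).1 (f t).1).Countable := by
    refine Set.PairwiseDisjoint.countable_of_isOpen
      (s := fun x => f ⁻¹' {p | lexLT (x, 0) p} ∩ f ⁻¹' {p | lexLT p (x, 1)}) ?_ ?_ ?_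
    · have h1 : ∀ x p, lexLT (x, 0) p → lexLT p (x, 1) → p.1 = x := by
        intro x p h1 h2
        rcases h1 with h1 | ⟨h1, -⟩
        · rcases h2 with h2 | ⟨h2, -⟩
          · exact absurd h1 h2.asymm
          · exact h2
        · exact h1.symm
      intro x _ y _ hxy
      refine Set.disjoint_left.2 ?_
      rintro u ⟨ha, hb⟩ ⟨hc, hd⟩
      exact hxy ((h1 x _ ha hb).symm.trans (h1 y _ hc hd))
    · intro x _
      exact (pre_open hf (isOpen_rayR _)).inter (pre_open hf (isOpen_rayL _))
    · intro x hx
      obtain ⟨u, hu⟩ := key (x, half) hx.1 hx.2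
      refine ⟨u, ?_, ?_⟩
      · simp only [mem_preimage, mem_ofPred_eq, hu]
        refine Or.inr ⟨rfl, ?_⟩
        rw [← Subtype.coe_lt_coe]; norm_num [half]
      · simp only [mem_preimage, mem_ofPred_eq, hu]
        refine Or.inr ⟨rfl, ?_⟩
        rw [← Subtype.coe_lt_coe]; norm_num [half]
  have hc2 := hc.image (Subtype.val)
  have hsub : Ioo ((f s).1 : ℝ) (f t).1 ⊆ Subtype.val '' (Ioo (f s).1 (f t).1) := by
    intro x hx
    exact ⟨⟨x, (f s).1.2.1.trans hx.1.le, hx.2.le.trans (f t).1.2.2⟩, hx, rfl⟩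
  have := Cardinal.Real.Ioo_countable_iff.1 (hc2.mono hsub)
  exact absurd hlt (not_lt.2 this)

theorem path_const (f : 𝕀 → 𝕀 × 𝕀) (hf : @Continuous _ _ _ lexTop f) (s t : 𝕀) :
    (f s).1 = (f t).1 :=
  le_antisymm (not_lt.1 (path_not_lt f hf t s)) (not_lt.1 (path_not_lt f hf s t))

theorem not_open_left (c : 𝕀) (h0 : 0 < c) (O : Set (𝕀 × 𝕀)) (hO : @IsOpen _ lexTop O)
    (hm : (c, 0) ∈ O) : ∃ p ∈ O, p.1 ≠ c := by
  have ht : Filter.Tendsto (fun s : 𝕀 => (s, (0 : 𝕀))) (nhdsWithin c (Iio c))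
      (@nhds _ lexTop (c, 0)) := by
    refine TopologicalSpace.tendsto_nhds_generateFrom_iff.2 ?_
    rintro S (⟨a, rfl⟩ | ⟨a, rfl⟩) ha
    · have h : a.1 < c := by
        rcases ha with h | ⟨_, h⟩
        · exact h
        · exact absurd h (not_lt.2 unitInterval.nonneg')
      filter_upwards [mem_nhdsWithin_of_mem_nhds (Ioi_mem_nhds h)] with s hs
      exact Or.inl hs
    · filter_upwards [self_mem_nhdsWithin] with s hs
      refine Or.inl (lt_of_lt_of_le hs ?_)
      rcases ha with h | ⟨h, _⟩
      · exact h.le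
      · exact h.le
  have hne : (nhdsWithin c (Iio c)).NeBot := nhdsLT_neBot_of_exists_lt ⟨0, h0⟩
  have h1 : ∀ᶠ s in nhdsWithin c (Iio c), (s, (0 : 𝕀)) ∈ O := ht (open_mem_nhds hO hm)
  obtain ⟨s, hs, hs2⟩ := (Filter.Eventually.and h1 self_mem_nhdsWithin).exists
  exact ⟨_, hs, ne_of_lt hs2⟩

theorem not_open_right (c : 𝕀) (h0 : c < 1) (O : Set (𝕀 × 𝕀)) (hO : @IsOpen _ lexTop O)
    (hm : (c, 1) ∈ O) : ∃ p ∈ O, p.1 ≠ c := by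
  have ht : Filter.Tendsto (fun s : 𝕀 => (s, (1 : 𝕀))) (nhdsWithin c (Ioi c))
      (@nhds _ lexTop (c, 1)) := by
    refine TopologicalSpace.tendsto_nhds_generateFrom_iff.2 ?_
    rintro S (⟨a, rfl⟩ | ⟨a, rfl⟩) ha
    · filter_upwards [self_mem_nhdsWithin] with s hs
      refine Or.inl (lt_of_le_of_lt ?_ hs)
      rcases ha with h | ⟨h, _⟩
      · exact h.le
      · exact h.le
    · have h : c < a.1 := by
        rcases ha with h | ⟨_, h⟩
        · exact h
        · exact absurd h (not_lt.2 unitInterval.le_one')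
      filter_upwards [mem_nhdsWithin_of_mem_nhds (Iio_mem_nhds h)] with s hs
      exact Or.inl hs
  have hne : (nhdsWithin c (Ioi c)).NeBot := nhdsGT_neBot_of_exists_gt ⟨1, h0⟩
  have h1 : ∀ᶠ s in nhdsWithin c (Ioi c), (s, (1 : 𝕀)) ∈ O := ht (open_mem_nhds hO hm)
  obtain ⟨s, hs, hs2⟩ := (Filter.Eventually.and h1 self_mem_nhdsWithin).exists
  exact ⟨_, hs, ne_of_gt hs2⟩

/-- No subgroup of the homeomorphism group of the lexicographically ordered square acts
topologically transitively: there are nonempty open sets `U`, `V` with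
`g(U) ∩ V = ∅` for all `g` in the subgroup. -/
theorem lex_square_no_topologically_transitive_subgroup
    (G : Subgroup (@Homeomorph (𝕀 × 𝕀) (𝕀 × 𝕀) lexTop lexTop)) :
    ∃ U V : Set (𝕀 × 𝕀), @IsOpen _ lexTop U ∧ @IsOpen _ lexTop V ∧
      U.Nonempty ∧ V.Nonempty ∧ ∀ g ∈ G, ⇑g '' U ∩ V = ∅ := by
  obtain ⟨c, hc0, hc1⟩ : ∃ c : 𝕀, 0 < c ∧ c < 1 := by
    refine ⟨⟨1/2, by norm_num, by norm_num⟩, ?_, ?_⟩ <;>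
    · rw [← Subtype.coe_lt_coe]; norm_num
  have hVo : @IsOpen _ lexTop ({x | lexLT (c, 0) x} ∩ {x | lexLT x (c, 1)}) :=
    @IsOpen.inter _ (_) (_) (_) (isOpen_rayR (c, 0)) (isOpen_rayL (c, 1))
  refine ⟨{x | lexLT x (0, 1)}, {x | lexLT (c, 0) x} ∩ {x | lexLT x (c, 1)},
    isOpen_rayL _, hVo, ⟨(0, 0), Or.inr ⟨rfl, hc0.trans hc1⟩⟩,
    ⟨(c, c), Or.inr ⟨rfl, hc0⟩, Or.inr ⟨rfl, hc1⟩⟩, ?_⟩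
  intro g _
  have hU0 : ∀ u, lexLT u (0, 1) → u.1 = 0 := by
    rintro u (h | ⟨h, -⟩)
    · exact absurd h (not_lt.2 unitInterval.nonneg')
    · exact h
  have hgc : @Continuous _ _ lexTop lexTop g := @Homeomorph.continuous _ _ lexTop lexTop g
  have hgs : @Continuous _ _ lexTop lexTop (@Homeomorph.symm _ _ lexTop lexTop g) :=
    @Homeomorph.continuous_symm _ _ lexTop lexTop g
  rw [Set.eq_empty_iff_forall_notMem]
  rintro v ⟨⟨u, hu, rfl⟩, hv1, hv2⟩
  have hu0 := hU0 u hu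
  have hv : (g u).1 = c := by
    rcases hv1 with h1 | ⟨h1, -⟩
    · rcases hv2 with h2 | ⟨h2, -⟩
      · exact absurd h1 h2.asymm
      · exact h2
    · exact h1.symm
  have hueq : u = (0, u.2) := Prod.ext hu0 rfl
  -- the image of column 0 lies in column c
  have hcol : ∀ t, (g (0, t)).1 = c := by
    intro t
    have := path_const (fun t => g (0, t))
      (@Continuous.comp _ _ _ _ lexTop lexTop _ _ hgc (continuous_column 0)) t u.2
    rw [this, ← hueq, hv]
  have hcol' : ∀ t, ((@Homeomorph.symm _ _ lexTop lexTop g) (c, t)).1 = 0 := by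
    intro t
    have := path_const (fun t => (@Homeomorph.symm _ _ lexTop lexTop g) (c, t))
      (@Continuous.comp _ _ _ _ lexTop lexTop _ _ hgs (continuous_column c)) t (g u).2
    have h2 : (c, (g u).2) = g u := Prod.ext hv.symm rfl
    rw [this, h2, @Homeomorph.symm_apply_apply _ _ lexTop lexTop g, hu0]
  have hO : @IsOpen _ lexTop (g '' {x | lexLT x (0, 1)}) :=
    @Homeomorph.isOpenMap _ _ lexTop lexTop g _ (isOpen_rayL _)
  have hOsub : ∀ p ∈ g '' {x | lexLT x (0, 1)}, p.1 = c := by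
    rintro p ⟨w, hw, rfl⟩
    have : w = (0, w.2) := Prod.ext (hU0 w hw) rfl
    rw [this, hcol]
  have hmem : ∀ t, (c, t) ∉ g '' {x | lexLT x (0, 1)} →
      (@Homeomorph.symm _ _ lexTop lexTop g) (c, t) = (0, 1) := by
    intro t ht
    by_contra hne
    apply ht
    refine ⟨(@Homeomorph.symm _ _ lexTop lexTop g) (c, t), Or.inr ⟨hcol' t, ?_⟩,
      @Homeomorph.apply_symm_apply _ _ lexTop lexTop g _⟩
    exact lt_of_le_of_ne unitInterval.le_one' (fun h => hne (Prod.ext (hcol' t) h))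
  have e0 := hmem 0 (fun h => by
    obtain ⟨p, hp, hpc⟩ := not_open_left c hc0 _ hO h
    exact hpc (hOsub p hp))
  have e1 := hmem 1 (fun h => by
    obtain ⟨p, hp, hpc⟩ := not_open_right c hc1 _ hO h
    exact hpc (hOsub p hp))
  have := @Homeomorph.injective _ _ lexTop lexTop (@Homeomorph.symm _ _ lexTop lexTop g)
    _ _ (e0.trans e1.symm)
  exact absurd (Prod.ext_iff.1 this).2 (hc0.trans hc1).ne
end

section
/- For the Alexandroff square 𝔸: (i) for the full homeomorphism group 𝒢_𝔸, the family {cl(𝒢_𝔸·x) : x ∈ 𝔸} of closures of orbits has exactly 6 elements (i.e. h(𝒢_𝔸, 𝔸) = 5); (ii) for every subgroup G of the homeomorphism group of 𝔸, the family {cl(G·x) : x ∈ 𝔸} is either infinite or has at least 6 elements; (iii) for every natural number n ≥ 5 there exists a subgroup G of the homeomorphism group of 𝔸 whose family {cl(G·x) : x ∈ 𝔸} has exactly n + 1 elements; and (iv) there exists a subgroup G for which this family is infinite. Equivalently, P_h(𝔸) = {n : n ≥ 5} ∪ {+∞}. -/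
open Set

/-- The unit interval `[0,1]` with its Euclidean (subspace) topology. -/
local notation "𝕀" => unitInterval

/-- The generating family for the Alexandroff square topology on `[0,1] × [0,1]`:
sets `{x} × U` with `U` open in `𝕀` and `x ∉ U`, together with sets
`([0,1] × U) \ (F × [0,1])` with `U` open in `𝕀` and `F` finite. -/
def alexBasis : Set (Set (𝕀 × 𝕀)) :=
  {S | (∃ (x : 𝕀) (U : Set 𝕀), IsOpen U ∧ x ∉ U ∧ S = ({x} : Set 𝕀) ×ˢ U) ∨
       (∃ (U F : Set 𝕀), IsOpen U ∧ F.Finite ∧ S = ((univ : Set 𝕀) ×ˢ U) \ (F ×ˢ (univ : Set 𝕀)))}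

/-- The Alexandroff square topology. -/
def alexTop : TopologicalSpace (𝕀 × 𝕀) := TopologicalSpace.generateFrom alexBasis

/-- The family of closures of orbits of a subgroup `G` of the homeomorphism group of
the Alexandroff square. -/
def orbitClosures (G : Subgroup (@Homeomorph (𝕀 × 𝕀) (𝕀 × 𝕀) alexTop alexTop)) :
    Set (Set (𝕀 × 𝕀)) :=
  {S | ∃ x : 𝕀 × 𝕀, S = @closure _ alexTop {y | ∃ g ∈ G, g x = y}}

noncomputable section

namespace Alex

/-- logit -/
def lgt (y : 𝕀) : ℝ := -Real.log ((y : ℝ)⁻¹ - 1)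

/-- sigmoid -/
abbrev sig : ℝ → 𝕀 := unitInterval.sigmoid

lemma ends_iff (y : 𝕀) : ¬ (y = 0 ∨ y = 1) ↔ 0 < y ∧ y < 1 := by
  rw [not_or, unitInterval.pos_iff_ne_zero, unitInterval.lt_one_iff_ne_one]

lemma lgt_sig (t : ℝ) : lgt (sig t) = t := by
  have : ((sig t : 𝕀) : ℝ) = (1 + Real.exp (-t))⁻¹ := rfl
  rw [lgt, this]
  simp

lemma sig_lgt {y : 𝕀} (h0 : 0 < y) (h1 : y < 1) : sig (lgt y) = y := by
  have : y ∈ range unitInterval.sigmoid := by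
    rw [unitInterval.range_sigmoid]; exact ⟨h0, h1⟩
  obtain ⟨t, rfl⟩ := this
  exact congrArg _ (lgt_sig t)

lemma sig_ne (t : ℝ) : ¬ (sig t = 0 ∨ sig t = 1) :=
  (ends_iff _).2 ⟨unitInterval.sigmoid_pos t, unitInterval.sigmoid_lt_one t⟩

lemma lgt_lt {x y : 𝕀} (hx : 0 < x) (hxy : x < y) (hy : y < 1) : lgt x < lgt y := by
  rw [← unitInterval.sigmoid_lt_iff]
  change sig _ < sig _
  rwa [sig_lgt hx (hxy.trans hy), sig_lgt (hx.trans hxy) hy]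

lemma continuousAt_lgt {y : 𝕀} (h0 : 0 < y) (h1 : y < 1) : ContinuousAt lgt y := by
  have h0' : (0:ℝ) < y := h0
  have h1' : (y:ℝ) < 1 := h1
  have h2 : 0 < (y:ℝ)⁻¹ - 1 := by
    have := (one_lt_inv₀ h0').2 h1'
    linarith
  unfold lgt
  refine ContinuousAt.neg (ContinuousAt.log ?_ h2.ne')
  exact (continuousAt_subtype_val.inv₀ h0'.ne').sub continuousAt_const

/-- extension function -/
def extF (f : ℝ ≃o ℝ) (y : 𝕀) : 𝕀 := if y = 0 ∨ y = 1 then y else sig (f (lgt y))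

lemma extF_sig (f : ℝ ≃o ℝ) (t : ℝ) : extF f (sig t) = sig (f t) := by
  rw [extF, if_neg (sig_ne t), lgt_sig]

lemma cases_I (y : 𝕀) : y = 0 ∨ y = 1 ∨ ∃ t, y = sig t := by
  by_cases h : y = 0 ∨ y = 1
  · tauto
  · rw [ends_iff] at h
    exact Or.inr (Or.inr ⟨_, (sig_lgt h.1 h.2).symm⟩)

lemma extF_zero (f : ℝ ≃o ℝ) : extF f 0 = 0 := by simp [extF]
lemma extF_one (f : ℝ ≃o ℝ) : extF f 1 = 1 := by simp [extF]

lemma extF_inv (f : ℝ ≃o ℝ) (y : 𝕀) : extF f (extF f.symm y) = y := by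
  rcases cases_I y with rfl | rfl | ⟨t, rfl⟩
  · simp [extF_zero]
  · simp [extF_one]
  · simp [extF_sig]

lemma extF_mono (f : ℝ ≃o ℝ) : StrictMono (extF f) := by
  intro x y h
  rcases cases_I x with rfl | rfl | ⟨s, rfl⟩
  · rcases cases_I y with rfl | rfl | ⟨t, rfl⟩
    · exact absurd h (lt_irrefl _)
    · simp [extF_zero, extF_one]
    · rw [extF_zero, extF_sig]; exact unitInterval.sigmoid_pos _
  · exact absurd h (not_lt.2 unitInterval.le_one')
  · rcases cases_I y with rfl | rfl | ⟨t, rfl⟩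
    · exact absurd h (not_lt.2 unitInterval.nonneg')
    · rw [extF_one, extF_sig]; exact unitInterval.sigmoid_lt_one _
    · rw [extF_sig, extF_sig, unitInterval.sigmoid_lt_iff, f.lt_iff_lt]
      exact unitInterval.sigmoid_lt_iff.1 h

/-- extension of an order isomorphism of the line to the interval -/
def ext (f : ℝ ≃o ℝ) : 𝕀 ≃o 𝕀 :=
  (extF_mono f).orderIsoOfRightInverse _ (extF f.symm) (extF_inv f)

lemma ext_sig (f : ℝ ≃o ℝ) (t : ℝ) : ext f (sig t) = sig (f t) := extF_sig f t

lemma ext_mid (f : ℝ ≃o ℝ) {y : 𝕀} (h0 : 0 < y) (h1 : y < 1) : ext f y = sig (f (lgt y)) := by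
  change extF f y = _
  rw [extF, if_neg ((ends_iff _).2 ⟨h0, h1⟩)]

lemma oi_zero (u : 𝕀 ≃o 𝕀) : u 0 = 0 := u.map_bot
lemma oi_one (u : 𝕀 ≃o 𝕀) : u 1 = 1 := u.map_top

/-- fractional part -/
def fI (t : ℝ) : 𝕀 := ⟨Int.fract t, Int.fract_nonneg t, (Int.fract_lt_one t).le⟩

lemma fI_lt (t : ℝ) : fI t < 1 := Int.fract_lt_one t

/-- periodic extension -/
def perF (u : 𝕀 ≃o 𝕀) (t : ℝ) : ℝ := ⌊t⌋ + (u (fI t) : ℝ)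

lemma u_fI_lt (u : 𝕀 ≃o 𝕀) (t : ℝ) : (u (fI t) : ℝ) < 1 := by
  have := u.lt_iff_lt.2 (fI_lt t)
  rw [oi_one] at this
  exact this

lemma perF_floor (u : 𝕀 ≃o 𝕀) (t : ℝ) : ⌊perF u t⌋ = ⌊t⌋ := by
  rw [perF, Int.floor_intCast_add, add_eq_left, Int.floor_eq_zero_iff]
  exact ⟨(u (fI t)).2.1, u_fI_lt u t⟩

lemma perF_fI (u : 𝕀 ≃o 𝕀) (t : ℝ) : fI (perF u t) = u (fI t) := by
  apply Subtype.ext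
  change Int.fract _ = _
  rw [Int.fract, perF_floor, perF]; ring

lemma floor_fI (t : ℝ) : (⌊t⌋ : ℝ) + (fI t : ℝ) = t := Int.floor_add_fract t

lemma perF_inv (u : 𝕀 ≃o 𝕀) (t : ℝ) : perF u (perF u.symm t) = t := by
  rw [perF, perF_floor, perF_fI, OrderIso.apply_symm_apply, floor_fI]

lemma perF_mono (u : 𝕀 ≃o 𝕀) : StrictMono (perF u) := by
  intro x y h
  rcases (Int.floor_mono h.le).lt_or_eq with h1 | h1
  · have h2 : (⌊x⌋ : ℝ) + 1 ≤ ⌊y⌋ := by exact_mod_cast h1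
    have := u_fI_lt u x
    have := (u (fI y)).2.1
    unfold perF
    linarith
  · have h3 : fI x < fI y := by
      change Int.fract x < Int.fract y
      unfold Int.fract
      rw [h1]; linarith
    have h4 : (u (fI x) : ℝ) < u (fI y) := u.lt_iff_lt.2 h3
    unfold perF
    rw [h1]; linarith

/-- periodic extension as an order isomorphism -/
def per (u : 𝕀 ≃o 𝕀) : ℝ ≃o ℝ :=
  (perF_mono u).orderIsoOfRightInverse _ (perF u.symm) (perF_inv u)

/-- rank function on the line -/
def sg : ℕ → ℝ → ℕ
  | 0, _ => 0
  | m + 1, t => if fI t = 0 ∨ fI t = 1 then 0 else 1 + sg m (lgt (fI t))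

/-- rank function on the interval -/
def ta (m : ℕ) (y : 𝕀) : ℕ := if y = 0 ∨ y = 1 then 0 else 1 + sg m (lgt y)

lemma sg_succ (m : ℕ) (t : ℝ) : sg (m + 1) t = ta m (fI t) := rfl

lemma ta_zero (m : ℕ) : ta m 0 = 0 := by simp [ta]
lemma ta_one (m : ℕ) : ta m 1 = 0 := by simp [ta]
lemma ta_sig (m : ℕ) (t : ℝ) : ta m (sig t) = 1 + sg m t := by
  rw [ta, if_neg (sig_ne t), lgt_sig]

lemma ta_ext (m : ℕ) (f : ℝ ≃o ℝ) (hf : ∀ x, sg m (f x) = sg m x) (y : 𝕀) :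
    ta m (ext f y) = ta m y := by
  rcases cases_I y with rfl | rfl | ⟨t, rfl⟩
  · rw [oi_zero]
  · rw [oi_one]
  · rw [ext_sig, ta_sig, ta_sig, hf]

lemma sg_le (m : ℕ) (t : ℝ) : sg m t ≤ m := by
  induction m generalizing t with
  | zero => simp [sg]
  | succ m ih =>
    rw [sg]
    split_ifs
    · omega
    · have := ih (lgt (fI t)); omega

lemma sg_surj (m j : ℕ) (h : j ≤ m) : ∃ t, sg m t = j := by
  induction m generalizing j with
  | zero => exact ⟨0, by simp [sg]; omega⟩
  | succ m ih =>
    cases j with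
    | zero =>
      refine ⟨0, ?_⟩
      have : fI 0 = 0 := Subtype.ext (by simp [fI])
      rw [sg_succ, this, ta_zero]
    | succ j =>
      obtain ⟨t, ht⟩ := ih j (by omega)
      refine ⟨(sig t : 𝕀), ?_⟩
      have : fI (sig t : 𝕀) = sig t := Subtype.ext (by
        change Int.fract _ = _
        rw [Int.fract_eq_self]
        exact ⟨(sig t).2.1, unitInterval.sigmoid_lt_one t⟩)
      rw [sg_succ, this, ta_sig, ht]; omega

open Filter Topology

lemma ta_lsc_of (m : ℕ) (h : ∀ t, ∀ᶠ t' in 𝓝 t, sg m t ≤ sg m t') (y : 𝕀) :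
    ∀ᶠ y' in 𝓝 y, ta m y ≤ ta m y' := by
  by_cases hy : y = 0 ∨ y = 1
  · simp [ta, hy]
  · have hy' := (ends_iff y).1 hy
    have e1 : ∀ᶠ y' in 𝓝 y, y' ∈ Ioo (0:𝕀) 1 := isOpen_Ioo.mem_nhds hy'
    have e2 := (continuousAt_lgt hy'.1 hy'.2).eventually (h (lgt y))
    filter_upwards [e1, e2] with y' h1 h2
    rw [ta, ta, if_neg hy, if_neg ((ends_iff _).2 h1)]
    omega

lemma sg_lsc (m : ℕ) (t : ℝ) : ∀ᶠ t' in 𝓝 t, sg m t ≤ sg m t' := by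
  induction m generalizing t with
  | zero => simp [sg]
  | succ m ih =>
    simp only [sg_succ]
    by_cases h : fI t = 0
    · simp [h, ta_zero]
    · have h1 : t ≠ ⌊t⌋ := by
        intro h1
        apply h
        apply Subtype.ext
        change Int.fract t = 0
        rw [Int.fract]; linarith
      have h2 : ContinuousAt fI t := by
        rw [Topology.IsInducing.subtypeVal.continuousAt_iff]
        exact continuousAt_fract h1
      exact h2.eventually (ta_lsc_of m ih (fI t))

lemma ta_lsc (m : ℕ) (y : 𝕀) : ∀ᶠ y' in 𝓝 y, ta m y ≤ ta m y' := ta_lsc_of m (sg_lsc m) y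

lemma ta_open (m j : ℕ) : IsOpen {y | j < ta m y} := by
  rw [isOpen_iff_mem_nhds]
  intro y hy
  filter_upwards [ta_lsc m y] with y' h
  exact lt_of_lt_of_le hy h

lemma sg_homog (m : ℕ) (s t : ℝ) (h : sg m s = sg m t) :
    ∃ f : ℝ ≃o ℝ, f s = t ∧ ∀ x, sg m (f x) = sg m x := by
  induction m generalizing s t with
  | zero => exact ⟨OrderIso.addRight (t - s), by simp, fun x => rfl⟩
  | succ m ih =>
    have key : ∃ u : 𝕀 ≃o 𝕀, u (fI s) = fI t ∧ ∀ y, ta m (u y) = ta m y := by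
      rw [sg_succ, sg_succ] at h
      rcases cases_I (fI s) with h1 | h1 | ⟨a, h1⟩
      · rcases cases_I (fI t) with h2 | h2 | ⟨b, h2⟩
        · exact ⟨OrderIso.refl _, by simp [h1, h2], fun _ => rfl⟩
        · exact absurd h2 (fI_lt t).ne
        · rw [h1, h2, ta_zero, ta_sig] at h; omega
      · exact absurd h1 (fI_lt s).ne
      · rcases cases_I (fI t) with h2 | h2 | ⟨b, h2⟩
        · rw [h1, h2, ta_zero, ta_sig] at h; omega
        · exact absurd h2 (fI_lt t).ne
        · rw [h1, h2, ta_sig, ta_sig] at h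
          obtain ⟨f, hf, hf'⟩ := ih a b (by omega)
          exact ⟨ext f, by rw [h1, h2, ext_sig, hf], ta_ext m f hf'⟩
    obtain ⟨u, hu, hu'⟩ := key
    refine ⟨(per u).trans (OrderIso.addRight (((⌊t⌋ - ⌊s⌋ : ℤ)) : ℝ)), ?_, ?_⟩
    · change perF u s + ((⌊t⌋ - ⌊s⌋ : ℤ) : ℝ) = t
      rw [perF, hu]
      push_cast
      linarith [floor_fI t]
    · intro x
      change sg (m+1) (perF u x + ((⌊t⌋ - ⌊s⌋ : ℤ) : ℝ)) = _
      have : fI (perF u x + ((⌊t⌋ - ⌊s⌋ : ℤ) : ℝ)) = fI (perF u x) :=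
        Subtype.ext (Int.fract_add_intCast _ _)
      rw [sg_succ, sg_succ, this, perF_fI, hu']

lemma ta_homog (m : ℕ) {x y : 𝕀} (hx : 0 < x ∧ x < 1) (hy : 0 < y ∧ y < 1) (h : ta m x = ta m y) :
    ∃ u : 𝕀 ≃o 𝕀, u x = y ∧ ∀ z, ta m (u z) = ta m z := by
  rw [ta, ta, if_neg ((ends_iff _).2 hx), if_neg ((ends_iff _).2 hy)] at h
  obtain ⟨f, hf, hf'⟩ := sg_homog m (lgt x) (lgt y) (by omega)
  refine ⟨ext f, ?_, ta_ext m f hf'⟩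
  rw [← sig_lgt hx.1 hx.2, ext_sig, hf, sig_lgt hy.1 hy.2]

lemma homog2 {x y x' y' : 𝕀} (hx : 0 < x) (hxy : x < y) (hy : y < 1)
    (hx' : 0 < x') (hxy' : x' < y') (hy' : y' < 1) :
    ∃ u : 𝕀 ≃o 𝕀, u x = x' ∧ u y = y' := by
  have h1 := lgt_lt hx hxy hy
  have h2 := lgt_lt hx' hxy' hy'
  have hp : 0 < (lgt y' - lgt x') / (lgt y - lgt x) := div_pos (by linarith) (by linarith)
  refine ⟨ext (((OrderIso.addRight (- lgt x)).trans (OrderIso.mulRight₀ _ hp)).trans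
    (OrderIso.addRight (lgt x'))), ?_, ?_⟩
  · rw [ext_mid _ hx (hxy.trans hy)]
    simp
    exact sig_lgt hx' (hxy'.trans hy')
  · rw [ext_mid _ (hx.trans hxy) hy]
    refine Eq.trans ?_ (sig_lgt (hx'.trans hxy') hy')
    congr 1
    have : lgt y - lgt x ≠ 0 := by linarith
    simp only [OrderIso.trans_apply, OrderIso.addRight_apply, OrderIso.mulRight₀_apply]
    field_simp
    ring

lemma homog1 {x x' : 𝕀} (hx : 0 < x ∧ x < 1) (hx' : 0 < x' ∧ x' < 1) :
    ∃ u : 𝕀 ≃o 𝕀, u x = x' := by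
  obtain ⟨u, hu, -⟩ := ta_homog 0 hx hx' (by
    rw [ta, ta, if_neg ((ends_iff _).2 hx), if_neg ((ends_iff _).2 hx')]; rfl)
  exact ⟨u, hu⟩


/-- the Alexandroff square as a type of its own -/
def Asq : Type := 𝕀 × 𝕀

instance : TopologicalSpace Asq := alexTop

/-- pairing -/
def mk (x y : 𝕀) : Asq := (x, y)

@[simp] lemma mk_fst (x y : 𝕀) : (mk x y).1 = x := rfl
@[simp] lemma mk_snd (x y : 𝕀) : (mk x y).2 = y := rfl

lemma asq_ext {p q : Asq} (h1 : p.1 = q.1) (h2 : p.2 = q.2) : p = q := Prod.ext h1 h2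

lemma isOpen_b1 (c : 𝕀) {U : Set 𝕀} (hU : IsOpen U) (hc : c ∉ U) :
    IsOpen {p : Asq | p.1 = c ∧ p.2 ∈ U} :=
  TopologicalSpace.isOpen_generateFrom_of_mem (Or.inl ⟨c, U, hU, hc, rfl⟩)

lemma isOpen_b2 {U F : Set 𝕀} (hU : IsOpen U) (hF : F.Finite) :
    IsOpen {p : Asq | p.2 ∈ U ∧ p.1 ∉ F} :=
  TopologicalSpace.isOpen_generateFrom_of_mem (Or.inr ⟨U, F, hU, hF, by
    ext p
    exact ⟨fun h => ⟨⟨trivial, h.1⟩, fun h' => h.2 h'.1⟩,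
      fun h => ⟨h.1.2, fun h' => h.2 ⟨h', trivial⟩⟩⟩⟩)

lemma cont_of {X : Type} [TopologicalSpace X] (f : X → Asq)
    (h1 : ∀ (c : 𝕀) (U : Set 𝕀), IsOpen U → c ∉ U → IsOpen {x | (f x).1 = c ∧ (f x).2 ∈ U})
    (h2 : ∀ (U F : Set 𝕀), IsOpen U → F.Finite → IsOpen {x | (f x).2 ∈ U ∧ (f x).1 ∉ F}) :
    Continuous f := by
  refine continuous_generateFrom_iff.2 ?_
  rintro s (⟨c, U, hU, hc, rfl⟩ | ⟨U, F, hU, hF, rfl⟩)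
  · exact h1 c U hU hc
  · convert h2 U F hU hF using 1
    ext x
    exact ⟨fun h => ⟨h.1.2, fun h' => h.2 ⟨h', trivial⟩⟩,
      fun h => ⟨⟨trivial, h.1⟩, fun h' => h.2 h'.1⟩⟩

lemma continuous_snd' : Continuous (fun p : Asq => p.2) := by
  refine continuous_def.2 fun U hU => ?_
  have := isOpen_b2 hU finite_empty
  simp only [mem_empty_iff_false, not_false_eq_true, and_true] at this
  exact this

lemma continuous_mk (c : 𝕀) : Continuous (mk c) := by
  refine cont_of _ ?_ ?_
  · intro d U hU hd
    by_cases h : c = d <;> simp [h, hU]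
  · intro U F hU hF
    by_cases h : c ∈ F <;> simp [h, hU]

lemma continuous_diag : Continuous (fun x => mk x x) := by
  refine cont_of _ ?_ ?_
  · intro d U hU hd
    convert isOpen_empty
    ext x
    simp
    rintro rfl
    exact hd
  · intro U F hU hF
    exact hU.inter hF.isClosed.isOpen_compl

lemma isClosed_col (c : 𝕀) : IsClosed {p : Asq | p.1 = c} := by
  rw [← isOpen_compl_iff]
  have := isOpen_b2 isOpen_univ (finite_singleton c)
  simp only [mem_univ, true_and] at this
  exact this

lemma isOpen_arm (c : 𝕀) : IsOpen {p : Asq | p.1 = c ∧ p.1 ≠ p.2} := by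
  convert isOpen_b1 c (isOpen_compl_singleton (x := c)) (by simp) using 1
  ext p
  constructor
  · rintro ⟨rfl, h⟩; exact ⟨rfl, Ne.symm h⟩
  · rintro ⟨rfl, h⟩; exact ⟨rfl, Ne.symm h⟩

lemma isClosed_diag : IsClosed {p : Asq | p.1 = p.2} := by
  rw [← isOpen_compl_iff]
  have : {p : Asq | p.1 = p.2}ᶜ = ⋃ c, {p : Asq | p.1 = c ∧ p.1 ≠ p.2} := by
    ext p
    simp only [mem_compl_iff, mem_ofPred_eq, mem_iUnion, exists_and_right, exists_eq', true_and]
  rw [this]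
  exact isOpen_iUnion isOpen_arm

lemma nhds_off {c y : 𝕀} (h : c ≠ y) : 𝓝 (mk c y) = map (mk c) (𝓝 y) := by
  refine le_antisymm ?_ (continuous_mk c).continuousAt
  intro S hS
  rw [mem_map] at hS
  obtain ⟨U, hU, hUo, hy⟩ := mem_nhds_iff.1 hS
  refine mem_of_superset ((isOpen_b1 c (hUo.inter (isOpen_compl_singleton (x := c)))
    (by simp)).mem_nhds (x := mk c y) ⟨rfl, hy, Ne.symm h⟩) ?_
  rintro ⟨a, b⟩ ⟨h1, h2, -⟩
  obtain rfl : a = c := h1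
  exact hU h2

lemma tendsto_row (x : 𝕀) : Tendsto (fun c => mk c x) cofinite (𝓝 (mk x x)) := by
  refine TopologicalSpace.tendsto_nhds_generateFrom_iff.2 ?_
  rintro s (⟨c, U, hU, hc, rfl⟩ | ⟨U, F, hU, hF, rfl⟩) h
  · exact absurd (h.1 ▸ h.2) hc
  · refine mem_of_superset hF.compl_mem_cofinite ?_
    intro c hc
    exact ⟨⟨trivial, h.1.2⟩, fun h' => hc h'.1⟩

lemma not_cg (x : 𝕀) : ¬ (𝓝 (mk x x)).IsCountablyGenerated := by
  intro h
  obtain ⟨s, hs⟩ := (𝓝 (mk x x)).exists_antitone_basis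
  have h1 : (⋃ n, {c | mk c x ∉ s n}).Countable :=
    countable_iUnion fun n => (mem_cofinite.1 (tendsto_row x (hs.1.mem_of_mem trivial))).countable
  have h2 : ∃ c, c ∉ (⋃ n, {c | mk c x ∉ s n}) ∪ {x} := by
    by_contra! h3
    have : (univ : Set 𝕀).Countable := (h1.union (countable_singleton x)).mono (fun c _ => h3 c)
    have h4 : Countable 𝕀 := countable_univ_iff.1 this
    have h5 : (Icc (0:ℝ) 1).Countable := h4
    exact (Cardinal.Real.Icc_countable_iff.not.2 (by norm_num)) h5
  obtain ⟨c, hc⟩ := h2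
  simp at hc
  obtain ⟨n, -, hn⟩ := hs.1.mem_iff.1
    ((isClosed_col c).isOpen_compl.mem_nhds (x := mk x x) (fun h => hc.1 h.symm))
  exact hn (hc.2 n) rfl

lemma diag_iff (p : Asq) : p.1 = p.2 ↔ ¬ (𝓝 p).IsCountablyGenerated := by
  constructor
  · obtain ⟨a, b⟩ := p
    rintro h
    obtain rfl : a = b := h
    exact not_cg a
  · intro h
    by_contra h'
    apply h
    change (𝓝 (mk p.1 p.2)).IsCountablyGenerated
    rw [nhds_off h']
    infer_instance

lemma diag_inv (g : Asq ≃ₜ Asq) (p : Asq) : (g p).1 = (g p).2 ↔ p.1 = p.2 := by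
  rw [diag_iff, diag_iff, not_iff_not, ← g.map_nhds_eq]
  constructor
  · intro h
    have : 𝓝 p = map g.symm (map g (𝓝 p)) := by
      rw [map_map]; simp
    rw [this]; infer_instance
  · intro h; infer_instance

lemma col_aux (g : Asq ≃ₜ Asq) (x y : 𝕀) (s : Set 𝕀) (hs : IsPreconnected s) (hx : x ∉ s)
    (hx' : x ∈ closure s) (hy : y ∈ s) : (g (mk x y)).1 = (g (mk x x)).1 := by
  set c := (g (mk x y)).1 with hc
  have hg : Continuous (fun z => g (mk x z)) := g.continuous.comp (continuous_mk x)
  have hd : ∀ z ∈ s, (g (mk x z)).1 ≠ (g (mk x z)).2 := by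
    intro z hz h
    rw [diag_inv] at h
    exact hx ((show x = z from h) ▸ hz)
  have h1 := hs.subset_left_of_subset_union ((isOpen_arm c).preimage hg)
    ((isClosed_col c).isOpen_compl.preimage hg) (by
      rw [Set.disjoint_left]; rintro z hz hz'; exact hz' hz.1) (by
      intro z hz
      by_cases h : (g (mk x z)).1 = c
      · exact Or.inl ⟨h, hd z hz⟩
      · exact Or.inr h) ⟨y, hy, hc.symm, hd y hy⟩
  have h2 : s ⊆ (fun z => g (mk x z)) ⁻¹' {p | p.1 = c} := fun z hz => (h1 hz).1
  exact (closure_minimal h2 ((isClosed_col c).preimage hg) hx').symm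

lemma col_inv (g : Asq ≃ₜ Asq) (x y : 𝕀) : (g (mk x y)).1 = (g (mk x x)).1 := by
  rcases lt_trichotomy y x with h | rfl | h
  · refine col_aux g x y (Iio x) isPreconnected_Iio (by simp) ?_ h
    rw [closure_Iio' ⟨y, h⟩]; simp
  · rfl
  · refine col_aux g x y (Ioi x) isPreconnected_Ioi (by simp) ?_ h
    rw [closure_Ioi' ⟨y, h⟩]; simp

lemma ends_of (u v : 𝕀 → 𝕀) (hu : Continuous u) (hvu : ∀ x, v (u x) = x) (huv : ∀ x, u (v x) = x)
    (x : 𝕀) (hx : x = 0 ∨ x = 1) : u x = 0 ∨ u x = 1 := by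
  have hi : Function.Injective u := fun a b h => by rw [← hvu a, h, hvu]
  rcases hu.strictMono_of_inj_boundedOrder' hi with h | h
  · rcases hx with rfl | rfl
    · left
      have := h.monotone (unitInterval.nonneg' (t := v 0))
      rw [huv] at this
      exact le_antisymm this unitInterval.nonneg'
    · right
      have := h.monotone (unitInterval.le_one' (t := v 1))
      rw [huv] at this
      exact le_antisymm unitInterval.le_one' this
  · rcases hx with rfl | rfl
    · right
      have := h.antitone (unitInterval.nonneg' (t := v 1))
      rw [huv] at this
      exact le_antisymm unitInterval.le_one' this
    · left
      have := h.antitone (unitInterval.le_one' (t := v 0))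
      rw [huv] at this
      exact le_antisymm this unitInterval.nonneg'

def ph (g : Asq ≃ₜ Asq) (x : 𝕀) : 𝕀 := (g (mk x x)).2

lemma g_diag (g : Asq ≃ₜ Asq) (x : 𝕀) : g (mk x x) = mk (ph g x) (ph g x) :=
  asq_ext ((diag_inv g (mk x x)).2 rfl) rfl

lemma ph_cont (g : Asq ≃ₜ Asq) : Continuous (ph g) :=
  continuous_snd'.comp (g.continuous.comp continuous_diag)

lemma ph_symm (g : Asq ≃ₜ Asq) (x : 𝕀) : ph g.symm (ph g x) = x := by
  rw [ph, ← g_diag, g.symm_apply_apply, mk_snd]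

lemma g_fst (g : Asq ≃ₜ Asq) (p : Asq) : (g p).1 = ph g p.1 := by
  have := col_inv g p.1 p.2
  rw [g_diag] at this
  exact this

/-- induced map on a column -/
def ps (g : Asq ≃ₜ Asq) (x y : 𝕀) : 𝕀 := (g (mk x y)).2

lemma g_mk (g : Asq ≃ₜ Asq) (x y : 𝕀) : g (mk x y) = mk (ph g x) (ps g x y) :=
  asq_ext (g_fst g _) rfl

lemma ps_symm (g : Asq ≃ₜ Asq) (x y : 𝕀) : ps g.symm (ph g x) (ps g x y) = y := by
  rw [ps, ← g_mk, g.symm_apply_apply, mk_snd]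

lemma ps_symm' (g : Asq ≃ₜ Asq) (x y : 𝕀) : ps g x (ps g.symm (ph g x) y) = y := by
  have := ps_symm g.symm (ph g x) y
  rwa [ph_symm, g.symm_symm] at this

/-- left and right columns -/
def isL (p : Asq) : Prop := p.1 = 0 ∨ p.1 = 1
/-- top and bottom edges -/
def isB (p : Asq) : Prop := p.2 = 0 ∨ p.2 = 1

lemma L_inv (g : Asq ≃ₜ Asq) (p : Asq) (h : isL p) : isL (g p) := by
  unfold isL
  rw [g_fst]
  exact ends_of (ph g) (ph g.symm) (ph_cont g) (ph_symm g)
    (fun x => by simpa using ph_symm g.symm x) _ h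

lemma B_inv (g : Asq ≃ₜ Asq) (p : Asq) (h : isB p) : isB (g p) := 
  ends_of (ps g p.1) (ps g.symm (ph g p.1))
    (continuous_snd'.comp (g.continuous.comp (continuous_mk _))) (ps_symm g p.1)
    (ps_symm' g p.1) p.2 h

lemma L_inv' (g : Asq ≃ₜ Asq) (p : Asq) : isL (g p) ↔ isL p :=
  ⟨fun h => by simpa using L_inv g.symm _ h, L_inv g p⟩

lemma B_inv' (g : Asq ≃ₜ Asq) (p : Asq) : isB (g p) ↔ isB p :=
  ⟨fun h => by simpa using B_inv g.symm _ h, B_inv g p⟩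

lemma isClosed_L : IsClosed {p | isL p} := (isClosed_col 0).union (isClosed_col 1)

lemma isClosed_B : IsClosed {p | isB p} :=
  (isClosed_singleton.preimage continuous_snd').union (isClosed_singleton.preimage continuous_snd')


def R (m : ℕ) (p : Asq) : ℕ :=
  if p.1 = 0 then ta m p.2 else if p.1 = 1 then ta m (unitInterval.symm p.2) else 0

lemma R_closed (m j : ℕ) : IsClosed {p | R m p ≤ j} := by
  rw [← isOpen_compl_iff]
  have : {p | R m p ≤ j}ᶜ = {p : Asq | p.1 = 0 ∧ p.2 ∈ {y | j < ta m y}} ∪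
      {p : Asq | p.1 = 1 ∧ p.2 ∈ unitInterval.symm ⁻¹' {y | j < ta m y}} := by
    ext p
    simp only [mem_compl_iff, mem_ofPred_eq, not_le, mem_union, mem_preimage, R]
    by_cases h0 : p.1 = 0
    · simp [h0]
    · by_cases h1 : p.1 = 1 <;> simp [h0, h1]
  rw [this]
  refine (isOpen_b1 0 (ta_open m j) (by simp [ta_zero])).union
    (isOpen_b1 1 ((ta_open m j).preimage unitInterval.continuous_symm) (by simp [ta_zero]))

/-- the stabilizer of the rank -/
def stab (m : ℕ) : Subgroup (Asq ≃ₜ Asq) where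
  carrier := {g | ∀ p, R m (g p) = R m p}
  mul_mem' := by
    intro g h hg hh p
    change R m (g (h p)) = _
    rw [hg, hh]
  one_mem' := fun p => rfl
  inv_mem' := by
    intro g hg p
    change R m (g.symm p) = _
    rw [← hg, g.apply_symm_apply]

/-- product homeomorphism -/
def D (f : 𝕀 ≃ₜ 𝕀) : Asq ≃ₜ Asq where
  toFun p := mk (f p.1) (f p.2)
  invFun p := mk (f.symm p.1) (f.symm p.2)
  left_inv p := asq_ext (by simp) (by simp)
  right_inv p := asq_ext (by simp) (by simp)
  continuous_toFun := by
    refine cont_of _ ?_ ?_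
    · intro c U hU hc
      convert isOpen_b1 (f.symm c) (hU.preimage f.continuous) (by simpa using hc) using 1
      ext p
      simp [f.eq_symm_apply]
    · intro U F hU hF
      exact isOpen_b2 (hU.preimage f.continuous) (hF.preimage f.injective.injOn)
  continuous_invFun := by
    refine cont_of _ ?_ ?_
    · intro c U hU hc
      convert isOpen_b1 (f c) (hU.preimage f.symm.continuous) (by simpa using hc) using 1
      ext p
      simp [f.symm_apply_eq]
    · intro U F hU hF
      exact isOpen_b2 (hU.preimage f.symm.continuous) (hF.preimage f.symm.injective.injOn)

/-- moving a single column -/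
def colF (c : 𝕀) (u : 𝕀 → 𝕀) (p : Asq) : Asq := if p.1 = c then mk c (u p.2) else p

lemma colF_fst (c : 𝕀) (u : 𝕀 → 𝕀) (p : Asq) : (colF c u p).1 = p.1 := by
  unfold colF
  split_ifs with h
  · exact h.symm
  · rfl

lemma colF_eq (c : 𝕀) (u : 𝕀 → 𝕀) (p : Asq) (h : p.1 = c) : colF c u p = mk c (u p.2) := if_pos h
lemma colF_ne (c : 𝕀) (u : 𝕀 → 𝕀) (p : Asq) (h : p.1 ≠ c) : colF c u p = p := if_neg h

lemma colF_comp (c : 𝕀) (u v : 𝕀 → 𝕀) (h : ∀ x, u (v x) = x) (p : Asq) :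
    colF c u (colF c v p) = p := by
  by_cases hp : p.1 = c
  · rw [colF_eq c v p hp, colF_eq c u _ rfl, mk_snd, h]
    exact asq_ext hp.symm rfl
  · rw [colF_ne c v p hp, colF_ne c u p hp]

lemma colF_cont (c : 𝕀) (u : 𝕀 → 𝕀) (hu : Continuous u) (hi : ∀ x, u x = c ↔ x = c) :
    Continuous (colF c u) := by
  have huc : u c = c := (hi c).2 rfl
  refine cont_of _ ?_ ?_
  · intro d U hU hd
    by_cases h : d = c
    · subst h
      convert isOpen_b1 d (hU.preimage hu) (by simpa [huc] using hd) using 1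
      ext p
      simp only [mem_ofPred_eq, colF_fst, mem_preimage]
      refine and_congr_right fun h => ?_
      rw [colF_eq _ _ _ h, mk_snd]
    · convert isOpen_b1 d hU hd using 1
      ext p
      simp only [mem_ofPred_eq, colF_fst]
      refine and_congr_right fun h' => ?_
      rw [colF_ne _ _ _ (h'.trans_ne h)]
  · intro U F hU hF
    by_cases h : c ∈ F
    · convert isOpen_b2 hU hF using 1
      ext p
      simp only [mem_ofPred_eq, colF_fst]
      refine and_congr_left fun h' => ?_
      rw [colF_ne _ _ _ (fun h'' => h' (h'' ▸ h))]
    · convert (isOpen_b2 hU (hF.insert c)).union ((isOpen_b2 (hU.inter (hU.preimage hu)) hF).union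
        (isOpen_b1 c ((hU.preimage hu).inter (isOpen_compl_singleton (x := c))) (by simp))) using 1
      ext p
      simp only [mem_ofPred_eq, colF_fst, mem_union, mem_inter_iff, mem_preimage, mem_compl_iff,
        mem_singleton_iff, mem_insert_iff]
      by_cases hp : p.1 = c
      · rw [colF_eq _ _ _ hp, mk_snd]
        by_cases hpc : p.2 = c
        · simp [hp, hpc, huc, h]
        · simp [hp, hpc, h]
      · rw [colF_ne _ _ _ hp]
        simp [hp]
        tauto

/-- moving a single column, as a homeomorphism -/
def C (c : 𝕀) (u : 𝕀 ≃o 𝕀) (hu : u c = c) : Asq ≃ₜ Asq where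
  toFun := colF c u
  invFun := colF c u.symm
  left_inv := colF_comp c _ _ u.symm_apply_apply
  right_inv := colF_comp c _ _ u.apply_symm_apply
  continuous_toFun := colF_cont c _ u.continuous fun x => by
    rw [← u.injective.eq_iff (a := x) (b := c), hu]
  continuous_invFun := colF_cont c _ u.symm.continuous fun x => by
    rw [u.symm_apply_eq, hu]

/-- the point reflection -/
def rfl' : Asq ≃ₜ Asq := D unitInterval.symmHomeomorph

lemma rfl'_mk (x y : 𝕀) : rfl' (mk x y) = mk (unitInterval.symm x) (unitInterval.symm y) := rfl

lemma rfl'_mem (m : ℕ) : rfl' ∈ stab m := by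
  intro p
  change R m (mk (unitInterval.symm p.1) (unitInterval.symm p.2)) = _
  simp only [R, mk_fst, mk_snd, unitInterval.symm_symm]
  by_cases h0 : p.1 = 0
  · simp [h0]
  · by_cases h1 : p.1 = 1
    · simp [h1]
    · simp [h0, h1]

/-- product map corrected to be trivial on the extreme columns -/
def Dp (f : 𝕀 ≃o 𝕀) : Asq ≃ₜ Asq :=
  (D f.toHomeomorph).trans ((C 0 f.symm (oi_zero _)).trans (C 1 f.symm (oi_one _)))

lemma Dp_apply (f : 𝕀 ≃o 𝕀) (p : Asq) :
    Dp f p = colF 1 f.symm (colF 0 f.symm (mk (f p.1) (f p.2))) := rfl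

lemma Dp_mid (f : 𝕀 ≃o 𝕀) (p : Asq) (h0 : p.1 ≠ 0) (h1 : p.1 ≠ 1) :
    Dp f p = mk (f p.1) (f p.2) := by
  have h0' : f p.1 ≠ 0 := by
    rw [← oi_zero f]; exact f.injective.ne h0
  have h1' : f p.1 ≠ 1 := by
    rw [← oi_one f]; exact f.injective.ne h1
  rw [Dp_apply, colF_ne 0 _ _ h0', colF_ne 1 _ _ h1']

lemma Dp_L (f : 𝕀 ≃o 𝕀) (p : Asq) (h : p.1 = 0 ∨ p.1 = 1) : Dp f p = p := by
  rw [Dp_apply]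
  rcases h with h | h
  · rw [h, oi_zero, colF_eq 0 _ _ rfl, colF_ne 1 _ _ (by simp), mk_snd, f.symm_apply_apply]
    exact asq_ext h.symm rfl
  · rw [h, oi_one, colF_ne 0 _ _ (by simp), colF_eq 1 _ _ rfl, mk_snd, f.symm_apply_apply]
    exact asq_ext h.symm rfl

lemma Dp_mem (m : ℕ) (f : 𝕀 ≃o 𝕀) : Dp f ∈ stab m := by
  intro p
  by_cases h : p.1 = 0 ∨ p.1 = 1
  · rw [Dp_L f p h]
  · rw [not_or] at h
    have h0' : f p.1 ≠ 0 := by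
      rw [← oi_zero f]; exact f.injective.ne h.1
    have h1' : f p.1 ≠ 1 := by
      rw [← oi_one f]; exact f.injective.ne h.2
    rw [Dp_mid f p h.1 h.2]
    simp [R, h0', h1', h.1, h.2]

lemma C_mem (m : ℕ) (u : 𝕀 ≃o 𝕀) (hu : ∀ z, ta m (u z) = ta m z) :
    C 0 u (oi_zero u) ∈ stab m := by
  intro p
  change R m (colF 0 u p) = _
  by_cases h : p.1 = 0
  · rw [colF_eq _ _ _ h]
    simp [R, h, hu]
  · rw [colF_ne _ _ _ h]

/-- orbit relation -/
def Orb (G : Subgroup (Asq ≃ₜ Asq)) (p q : Asq) : Prop := ∃ g ∈ G, g p = q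

lemma Orb.trans {G : Subgroup (Asq ≃ₜ Asq)} {p q r : Asq} (h1 : Orb G p q) (h2 : Orb G q r) :
    Orb G p r := by
  obtain ⟨g, hg, rfl⟩ := h1
  obtain ⟨h, hh, rfl⟩ := h2
  exact ⟨h * g, G.mul_mem hh hg, rfl⟩

lemma Orb.symm {G : Subgroup (Asq ≃ₜ Asq)} {p q : Asq} (h1 : Orb G p q) : Orb G q p := by
  obtain ⟨g, hg, rfl⟩ := h1
  exact ⟨g⁻¹, G.inv_mem hg, g.symm_apply_apply p⟩

/-- orbit closure -/
def cl (G : Subgroup (Asq ≃ₜ Asq)) (p : Asq) : Set Asq := closure {q | Orb G p q}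

/-- family of orbit closures -/
def oc (G : Subgroup (Asq ≃ₜ Asq)) : Set (Set Asq) := range (cl G)

lemma orbitClosures_eq (G : Subgroup (Asq ≃ₜ Asq)) : orbitClosures G = oc G := by
  ext S
  exact ⟨fun ⟨x, h⟩ => ⟨x, h.symm⟩, fun ⟨x, h⟩ => ⟨x, h.symm⟩⟩

lemma cl_eq_of_orb {G : Subgroup (Asq ≃ₜ Asq)} {p q : Asq} (h : Orb G p q) : cl G p = cl G q := by
  unfold cl
  congr 1
  ext r
  exact ⟨fun h' => h.symm.trans h', fun h' => h.trans h'⟩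

lemma mem_cl (G : Subgroup (Asq ≃ₜ Asq)) (p : Asq) : p ∈ cl G p :=
  subset_closure ⟨1, G.one_mem, rfl⟩

lemma mem_of_cl {G : Subgroup (Asq ≃ₜ Asq)} {A : Set Asq} (hA : IsClosed A)
    (hG : ∀ g ∈ G, ∀ p ∈ A, g p ∈ A) {p q : Asq} (h : cl G p = cl G q) (hp : p ∈ A) : q ∈ A := by
  have h1 : cl G p ⊆ A := closure_minimal (by rintro _ ⟨g, hg, rfl⟩; exact hG g hg p hp) hA
  exact h1 (h ▸ mem_cl G q)

lemma mem_iff_cl {G : Subgroup (Asq ≃ₜ Asq)} {A : Set Asq} (hA : IsClosed A)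
    (hG : ∀ g ∈ G, ∀ p ∈ A, g p ∈ A) {p q : Asq} (h : cl G p = cl G q) : p ∈ A ↔ q ∈ A :=
  ⟨mem_of_cl hA hG h, mem_of_cl hA hG h.symm⟩

lemma cl_L {G : Subgroup (Asq ≃ₜ Asq)} {p q : Asq} (h : cl G p = cl G q) : isL p ↔ isL q :=
  mem_iff_cl isClosed_L (fun g _ p hp => L_inv g p hp) h
lemma cl_B {G : Subgroup (Asq ≃ₜ Asq)} {p q : Asq} (h : cl G p = cl G q) : isB p ↔ isB q :=
  mem_iff_cl isClosed_B (fun g _ p hp => B_inv g p hp) h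
lemma cl_D {G : Subgroup (Asq ≃ₜ Asq)} {p q : Asq} (h : cl G p = cl G q) :
    p.1 = p.2 ↔ q.1 = q.2 :=
  mem_iff_cl isClosed_diag (fun g _ p hp => (diag_inv g p).2 hp) h
lemma cl_R {m : ℕ} {p q : Asq} (h : cl (stab m) p = cl (stab m) q) : R m p = R m q := by
  have key : ∀ j, R m p ≤ j ↔ R m q ≤ j := fun j =>
    mem_iff_cl (R_closed m j) (fun g hg p hp => (hg p).trans_le hp) h
  exact le_antisymm ((key _).2 le_rfl) ((key _).1 le_rfl)

/-- one half -/
def hf : 𝕀 := sig 0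
/-- a smaller point -/
def qt : 𝕀 := sig (-1)

lemma hf_b : 0 < hf ∧ hf < 1 := ⟨unitInterval.sigmoid_pos _, unitInterval.sigmoid_lt_one _⟩
lemma qt_b : 0 < qt ∧ qt < 1 := ⟨unitInterval.sigmoid_pos _, unitInterval.sigmoid_lt_one _⟩
lemma qt_lt : qt < hf := unitInterval.sigmoid_lt (by norm_num)

/-- the level representative -/
def lev (m j : ℕ) : ℝ := if h : j ≤ m then (sg_surj m j h).choose else 0

lemma lev_spec (m j : ℕ) (h : j ≤ m) : sg m (lev m j) = j := by
  rw [lev, dif_pos h]; exact (sg_surj m j h).choose_spec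

/-- representatives -/
def rep (m : ℕ) : ℕ → Asq
  | 0 => mk 0 0
  | 1 => mk hf hf
  | 2 => mk hf 0
  | 3 => mk hf qt
  | 4 => mk 0 1
  | j + 5 => mk 0 (sig (lev m j))

lemma orb_rfl (m : ℕ) (x y : 𝕀) :
    Orb (stab m) (mk x y) (mk (unitInterval.symm x) (unitInterval.symm y)) :=
  ⟨rfl', rfl'_mem m, rfl⟩

lemma exists_rep (m : ℕ) (p : Asq) : ∃ j < m + 6, Orb (stab m) p (rep m j) := by
  obtain ⟨x, y⟩ := p
  change ∃ j < m + 6, Orb (stab m) (mk x y) (rep m j)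
  have L0 : ∀ y, ∃ j < m + 6, Orb (stab m) (mk 0 y) (rep m j) := by
    intro y
    rcases cases_I y with rfl | rfl | ⟨t, rfl⟩
    · exact ⟨0, by omega, 1, (stab m).one_mem, rfl⟩
    · exact ⟨4, by omega, 1, (stab m).one_mem, rfl⟩
    · have hle := sg_le m t
      refine ⟨sg m t + 5, by omega, ?_⟩
      obtain ⟨u, hu, hu'⟩ := ta_homog m (x := sig t) (y := sig (lev m (sg m t)))
        ((ends_iff _).1 (sig_ne _)) ((ends_iff _).1 (sig_ne _))
        (by rw [ta_sig, ta_sig, lev_spec m _ hle])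
      refine ⟨_, C_mem m u hu', ?_⟩
      change colF 0 u _ = mk 0 _
      rw [colF_eq 0 _ _ rfl, mk_snd, hu]
  by_cases hx : x = 0 ∨ x = 1
  · rcases hx with rfl | rfl
    · exact L0 y
    · obtain ⟨j, hj, h⟩ := L0 (unitInterval.symm y)
      refine ⟨j, hj, (orb_rfl m _ _).trans ?_⟩
      simpa using h
  have hmv : ∀ (x y : 𝕀) (u : 𝕀 ≃o 𝕀), ¬ (x = 0 ∨ x = 1) →
      Orb (stab m) (mk x y) (mk (u x) (u y)) := fun x y u h =>
    ⟨Dp u, Dp_mem m u, Dp_mid u _ (fun h' => h (Or.inl h')) (fun h' => h (Or.inr h'))⟩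
  have half : ∀ x y, ¬ (x = 0 ∨ x = 1) → y ≤ x →
      ∃ j < m + 6, Orb (stab m) (mk x y) (rep m j) := by
    intro x y hx hyx
    have hx' := (ends_iff _).1 hx
    rcases hyx.eq_or_lt with rfl | hlt
    · obtain ⟨u, hu⟩ := homog1 hx' hf_b
      have := hmv y y u hx
      rw [hu] at this
      exact ⟨1, by omega, this⟩
    · by_cases hy : y = 0
      · subst hy
        obtain ⟨u, hu⟩ := homog1 hx' hf_b
        have := hmv x 0 u hx
        rw [hu, oi_zero] at this
        exact ⟨2, by omega, this⟩
      · obtain ⟨u, hu, hu'⟩ := homog2 (unitInterval.pos_iff_ne_zero.2 hy) hlt hx'.2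
          qt_b.1 qt_lt hf_b.2
        have := hmv x y u hx
        rw [hu, hu'] at this
        exact ⟨3, by omega, this⟩
  rcases le_total y x with h | h
  · exact half x y hx h
  · obtain ⟨j, hj, h⟩ := half (unitInterval.symm x) (unitInterval.symm y) (by
      simpa [or_comm] using hx) (unitInterval.symm_le_symm.2 h)
    exact ⟨j, hj, (orb_rfl m _ _).trans h⟩

lemma hf0 : hf ≠ 0 := hf_b.1.ne'
lemma hf1 : hf ≠ 1 := hf_b.2.ne
lemma qt0 : qt ≠ 0 := qt_b.1.ne'
lemma qt1 : qt ≠ 1 := qt_b.2.ne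
lemma hfqt : hf ≠ qt := qt_lt.ne'
lemma sg0 (t : ℝ) : sig t ≠ 0 := fun h => sig_ne t (Or.inl h)
lemma sg1 (t : ℝ) : sig t ≠ 1 := fun h => sig_ne t (Or.inr h)

lemma rep_inj_aux {m : ℕ} {G : Subgroup (Asq ≃ₜ Asq)} {i j : ℕ} 
    (h : cl G (rep m i) = cl G (rep m j)) : min i 5 = min j 5 := by
  have h1 := cl_L h
  have h2 := cl_B h
  have h3 := cl_D h
  unfold isL at h1
  unfold isB at h2
  have e := fun t => (sg0 t).symm
  rcases i with _ | _ | _ | _ | _ | i <;> rcases j with _ | _ | _ | _ | _ | j <;>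
    simp [rep, hf0, hf1, qt0, qt1, hfqt, sg0, sg1, e] at h1 h2 h3 ⊢

lemma rep_inj {m i j : ℕ} (hi : i < m + 6) (hj : j < m + 6)
    (h : cl (stab m) (rep m i) = cl (stab m) (rep m j)) : i = j := by
  have h1 := rep_inj_aux h
  by_cases hi5 : i < 5
  · omega
  · obtain ⟨i, rfl⟩ := Nat.exists_eq_add_of_le' (not_lt.1 hi5)
    obtain ⟨j, rfl⟩ := Nat.exists_eq_add_of_le' (show 5 ≤ j by omega)
    have h2 := cl_R h
    simp only [rep, R, mk_fst, mk_snd, if_true, ta_sig] at h2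
    rw [lev_spec m i (by omega), lev_spec m j (by omega)] at h2
    omega

lemma count (m : ℕ) : (oc (stab m)).Finite ∧ (oc (stab m)).ncard = m + 6 := by
  have h : oc (stab m) = (fun j => cl (stab m) (rep m j)) '' (Finset.range (m + 6)) := by
    unfold oc
    ext S
    constructor
    · rintro ⟨p, rfl⟩
      obtain ⟨j, hj, ho⟩ := exists_rep m p
      exact ⟨j, by simpa using hj, (cl_eq_of_orb ho).symm⟩
    · rintro ⟨j, -, rfl⟩
      exact ⟨_, rfl⟩
  rw [h]
  refine ⟨(Finset.finite_toSet _).image _, ?_⟩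
  rw [InjOn.ncard_image, ncard_coe_finset, Finset.card_range]
  intro i hi j hj h
  exact rep_inj (by simpa using hi) (by simpa using hj) h

lemma stab_zero : stab 0 = ⊤ := by
  classical
  have key : ∀ p, R 0 p = if isL p ∧ ¬ isB p then 1 else 0 := by
    intro p
    unfold R isL isB ta sg
    by_cases h0 : p.1 = 0
    · simp only [h0]
      by_cases hb : p.2 = 0 ∨ p.2 = 1 <;> simp [hb]
    · by_cases h1 : p.1 = 1
      · simp only [h1]
        by_cases hb : p.2 = 0 ∨ p.2 = 1
        · simp [hb, or_comm]
        · simp [hb, or_comm]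
      · simp [h0, h1]
  refine eq_top_iff.2 fun g _ p => ?_
  rw [key, key, L_inv', B_inv']

lemma lower (G : Subgroup (Asq ≃ₜ Asq)) (hG : (oc G).Finite) :
    6 ≤ (oc G).ncard := by
  unfold oc at *
  have h : ((fun j => cl G (rep 0 j)) '' (Finset.range 6)) ⊆ range (cl G) := by
    rintro _ ⟨j, -, rfl⟩
    exact ⟨_, rfl⟩
  refine le_trans (le_of_eq ?_) (ncard_le_ncard h hG)
  rw [InjOn.ncard_image, ncard_coe_finset, Finset.card_range]
  intro i hi j hj h
  have := rep_inj_aux h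
  simp at hi hj
  omega

lemma infinite_bot : (oc (⊥ : Subgroup (Asq ≃ₜ Asq))).Infinite := by
  unfold oc
  have hinf : Infinite 𝕀 := Infinite.of_injective sig unitInterval.sigmoid_injective
  refine (infinite_range_of_injective (f := fun c => cl ⊥ (mk c c)) ?_).mono ?_
  · intro a b h
    have := mem_of_cl (isClosed_col a) (fun g hg p hp => by
      rw [Subgroup.mem_bot] at hg
      subst hg
      exact hp) h (rfl : (mk a a).1 = a)
    exact (show b = a from this).symm
  · rintro _ ⟨c, rfl⟩
    exact ⟨_, rfl⟩

end Alex

end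


/-- `P_h(𝔸) = {n : n ≥ 5} ∪ {+∞}`: (i) the full homeomorphism group of the Alexandroff
square has exactly 6 closures of orbits, i.e. height 5; (ii) every subgroup has
infinitely many, or at least 6, closures of orbits; (iii) for every `n ≥ 5` some
subgroup has exactly `n + 1` closures of orbits (height `n`); and (iv) some subgroup
has infinitely many closures of orbits (height `+∞`). -/
theorem alexandroff_heights :
    ((orbitClosures ⊤).Finite ∧ (orbitClosures ⊤).ncard = 6) ∧
    (∀ G, (orbitClosures G).Finite → 6 ≤ (orbitClosures G).ncard) ∧
    (∀ n : ℕ, 5 ≤ n → ∃ G, (orbitClosures G).Finite ∧ (orbitClosures G).ncard = n + 1) ∧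
    (∃ G, (orbitClosures G).Infinite) := by
  refine ⟨?_, fun G hG => ?_, ?_, ⟨(⊥ : Subgroup (Alex.Asq ≃ₜ Alex.Asq)), ?_⟩⟩
  · have := Alex.count 0
    rw [Alex.stab_zero, ← Alex.orbitClosures_eq] at this
    exact this
  · have h : ∀ G : Subgroup (Alex.Asq ≃ₜ Alex.Asq), (orbitClosures G).Finite →
        6 ≤ (orbitClosures G).ncard := by
      intro G hG
      have := Alex.lower G
      rw [← Alex.orbitClosures_eq] at this
      exact this hG
    exact h G hG
  · intro n hn
    obtain ⟨m, rfl⟩ := Nat.exists_eq_add_of_le' hn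
    have := Alex.count m
    rw [← Alex.orbitClosures_eq] at this
    exact ⟨Alex.stab m, this⟩
  · have := Alex.infinite_bot
    rw [← Alex.orbitClosures_eq] at this
    exact this
end
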